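/- arXiv:2605.13077 — 4 statements merged into one kernel-verified Lean document; each statement's English description precedes it below -/
import Mathlib

section
/- For every coalitional value function v : Finset Ag → ℝ on a nonempty finite set of agents Ag with |Ag| = n, the Shapley values sum to the attributable value: Σ_{i ∈ Ag} Sh_i(v) = v(Ag) − v(∅). (Efficiency of the Shapley-based responsibility allocation.) -/
/-!
Grouping coalitions by size, `Sh_i(v)` is the average over `k < n` of the mean marginal contribution
of `i` to the `k`-element coalitions of the other agents. Let `A k` be the mean of `v` over all
`k`-element coalitions. Choosing `i` uniformly and then `J` uniformly among the `k`-element subsets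
of the complement of `{i}` makes `J` a uniform `k`-subset and `J ∪ {i}` a uniform `(k + 1)`-subset,
so averaging over `i` turns the mean marginal contribution into `A (k + 1) - A k`. Summing over `i`
leaves `∑ k < n, (A (k + 1) - A k)`, which telescopes to `A n - A 0 = v(Ag) - v(∅)`.
-/

open Finset

/-- The Shapley value of agent `i` with respect to the coalitional value function `v`:
`Sh_i(v) = Σ_{J ⊆ Ag \ {i}} (|J|! · (n − |J| − 1)! / n!) · (v(J ∪ {i}) − v(J))`. -/
noncomputable def shapley {Ag : Type*} [Fintype Ag] [DecidableEq Ag]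
    (v : Finset Ag → ℝ) (i : Ag) : ℝ :=
  ∑ J ∈ ((Finset.univ : Finset Ag).erase i).powerset,
    ((J.card.factorial * (Fintype.card Ag - J.card - 1).factorial : ℝ) /
      (Fintype.card Ag).factorial) * (v (insert i J) - v J)

open scoped BigOperators Nat

section DoubleCounting

variable {α M : Type*} [DecidableEq α] [AddCommMonoid M]

theorem sum_sum_powersetCard_erase (s : Finset α) (k : ℕ) (f : Finset α → M) :
    ∑ i ∈ s, ∑ J ∈ powersetCard k (s.erase i), f J = (#s - k) • ∑ J ∈ powersetCard k s, f J := by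
  calc ∑ i ∈ s, ∑ J ∈ powersetCard k (s.erase i), f J
      = ∑ J ∈ powersetCard k s, ∑ _i ∈ s \ J, f J := by
        refine sum_comm' fun i J => ?_
        simp only [mem_powersetCard, subset_erase, mem_sdiff]
        tauto
    _ = ∑ J ∈ powersetCard k s, (#s - k) • f J := by
        refine sum_congr rfl fun J hJ => ?_
        obtain ⟨hJs, hJk⟩ := mem_powersetCard.1 hJ
        rw [sum_const, card_sdiff_of_subset hJs, hJk]
    _ = (#s - k) • ∑ J ∈ powersetCard k s, f J := sum_nsmul _ _ _

theorem sum_powersetCard_erase_insert {s : Finset α} {i : α} (hi : i ∈ s) (k : ℕ)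
    (f : Finset α → M) :
    ∑ J ∈ powersetCard k (s.erase i), f (insert i J) =
      ∑ K ∈ powersetCard (k + 1) s with i ∈ K, f K := by
  refine sum_nbij' (insert i) (erase · i) ?_ ?_ ?_ ?_ fun _ _ => rfl
  · intro J hJ
    simp only [mem_powersetCard, subset_erase] at hJ
    obtain ⟨⟨hJs, hiJ⟩, hJk⟩ := hJ
    simp [insert_subset hi hJs, card_insert_of_notMem hiJ, hJk]
  · intro K hK
    simp only [mem_filter, mem_powersetCard] at hK
    obtain ⟨⟨hKs, hKk⟩, hiK⟩ := hK
    simp [erase_subset_erase i hKs, card_erase_of_mem hiK, hKk]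
  · intro J hJ
    exact erase_insert (subset_erase.1 (mem_powersetCard.1 hJ).1).2
  · intro K hK
    exact insert_erase (mem_filter.1 hK).2

theorem sum_sum_powersetCard_erase_insert (s : Finset α) (k : ℕ) (f : Finset α → M) :
    ∑ i ∈ s, ∑ J ∈ powersetCard k (s.erase i), f (insert i J) =
      (k + 1) • ∑ K ∈ powersetCard (k + 1) s, f K := by
  calc ∑ i ∈ s, ∑ J ∈ powersetCard k (s.erase i), f (insert i J)
      = ∑ i ∈ s, ∑ K ∈ powersetCard (k + 1) s with i ∈ K, f K :=
        sum_congr rfl fun i hi => sum_powersetCard_erase_insert hi k f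
    _ = ∑ K ∈ powersetCard (k + 1) s, ∑ _i ∈ K, f K := by
        refine sum_comm' fun i K => ?_
        simp only [mem_filter, mem_powersetCard]
        exact ⟨fun h => ⟨h.2.2, h.2.1⟩, fun h => ⟨h.2.1 h.1, h.2, h.1⟩⟩
    _ = ∑ K ∈ powersetCard (k + 1) s, (k + 1) • f K :=
        sum_congr rfl fun K hK => by rw [sum_const, (mem_powersetCard.1 hK).2]
    _ = (k + 1) • ∑ K ∈ powersetCard (k + 1) s, f K := sum_nsmul _ _ _

end DoubleCounting

section Averages

variable {ι κ μ α M : Type*} [DecidableEq α] [AddCommMonoid M] [Module ℚ≥0 M]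

theorem expect_expect_eq_expect_of_sum_sum_eq_nsmul {s : Finset ι} {t : ι → Finset κ}
    {u : Finset μ} {f : ι → κ → M} {g : μ → M} {c m : ℕ} (hm : m ≠ 0)
    (ht : ∀ i ∈ s, #(t i) = c) (hcard : #s * c = m * #u)
    (hsum : ∑ i ∈ s, ∑ j ∈ t i, f i j = m • ∑ x ∈ u, g x) :
    𝔼 i ∈ s, 𝔼 j ∈ t i, f i j = 𝔼 x ∈ u, g x := by
  have hm' : (m : ℚ≥0) ≠ 0 := Nat.cast_ne_zero.2 hm
  have hcard' : (#s * c : ℚ≥0) = m * #u := mod_cast hcard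
  calc 𝔼 i ∈ s, 𝔼 j ∈ t i, f i j
      = (#s : ℚ≥0)⁻¹ • ∑ i ∈ s, (c : ℚ≥0)⁻¹ • ∑ j ∈ t i, f i j := by
        simp only [expect]
        exact congrArg _ (sum_congr rfl fun i hi => by rw [ht i hi])
    _ = (#s * c : ℚ≥0)⁻¹ • (m : ℚ≥0) • ∑ x ∈ u, g x := by
        rw [← smul_sum, hsum, smul_smul, mul_inv, Nat.cast_smul_eq_nsmul]
    _ = 𝔼 x ∈ u, g x := by
        rw [hcard', smul_smul, mul_inv, mul_right_comm, inv_mul_cancel₀ hm', one_mul, expect]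

theorem card_powersetCard_erase {s : Finset α} {i : α} (hi : i ∈ s) (k : ℕ) :
    #(powersetCard k (s.erase i)) = (#s - 1).choose k := by
  rw [card_powersetCard, card_erase_of_mem hi]

theorem expect_expect_powersetCard_erase {s : Finset α} {k : ℕ} (hk : k < #s)
    (f : Finset α → M) :
    𝔼 i ∈ s, 𝔼 J ∈ powersetCard k (s.erase i), f J = 𝔼 J ∈ powersetCard k s, f J := by
  refine expect_expect_eq_expect_of_sum_sum_eq_nsmul (Nat.sub_ne_zero_of_lt hk)
    (fun i hi => card_powersetCard_erase hi k) ?_ (sum_sum_powersetCard_erase s k f)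
  obtain ⟨n, hn⟩ := Nat.exists_eq_add_one_of_ne_zero (Nat.ne_zero_of_lt hk)
  rw [card_powersetCard, hn, Nat.add_sub_cancel, mul_comm, Nat.choose_mul_succ_eq, mul_comm]

theorem expect_expect_powersetCard_erase_insert (s : Finset α) (k : ℕ) (f : Finset α → M) :
    𝔼 i ∈ s, 𝔼 J ∈ powersetCard k (s.erase i), f (insert i J) =
      𝔼 K ∈ powersetCard (k + 1) s, f K := by
  refine expect_expect_eq_expect_of_sum_sum_eq_nsmul k.succ_ne_zero
    (fun i hi => card_powersetCard_erase hi k) ?_ (sum_sum_powersetCard_erase_insert s k f)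
  rw [card_powersetCard]
  rcases #s with _ | n
  · simp
  · rw [Nat.add_sub_cancel, Nat.add_one_mul_choose_eq, mul_comm]

end Averages

theorem factorial_mul_factorial_div_factorial_eq_inv_mul_choose {K : Type*} [Field K] [CharZero K]
    {n k : ℕ} (hk : k < n) :
    (k ! * (n - k - 1)! : K) / n ! = (n * (n - 1).choose k : K)⁻¹ := by
  obtain ⟨n, rfl⟩ := Nat.exists_eq_add_one_of_ne_zero (Nat.ne_zero_of_lt hk)
  have hchoose : (n.choose k * k ! * (n - k)! : K) = n ! :=
    mod_cast Nat.choose_mul_factorial_mul_factorial (Nat.le_of_lt_succ hk)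
  have hk_ne : (k ! : K) ≠ 0 := Nat.cast_ne_zero.2 k.factorial_ne_zero
  have hnk_ne : ((n - k)! : K) ≠ 0 := Nat.cast_ne_zero.2 (n - k).factorial_ne_zero
  have hchoose_ne : (n.choose k : K) ≠ 0 :=
    Nat.cast_ne_zero.2 (Nat.choose_pos (Nat.le_of_lt_succ hk)).ne'
  rw [Nat.sub_right_comm, Nat.add_sub_cancel, Nat.factorial_succ, Nat.cast_mul, ← hchoose]
  field_simp

theorem shapley_eq_expect {Ag : Type*} [Fintype Ag] [DecidableEq Ag] (v : Finset Ag → ℝ) (i : Ag) :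
    shapley v i = 𝔼 k ∈ range (Fintype.card Ag), 𝔼 J ∈ powersetCard k (univ.erase i),
      (v (insert i J) - v J) := by
  set n := Fintype.card Ag with hn
  have hcard : #(univ.erase i) + 1 = n := card_erase_add_one (mem_univ i)
  rw [shapley, sum_powerset, hcard, expect_eq_sum_div_card, card_range, sum_div]
  refine sum_congr rfl fun k hk => ?_
  rw [expect_eq_sum_div_card, card_powersetCard_erase (mem_univ i), card_univ, ← hn, div_div,
    div_eq_inv_mul, mul_comm (Nat.cast _),
    ← factorial_mul_factorial_div_factorial_eq_inv_mul_choose (mem_range.1 hk), mul_sum]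
  refine sum_congr rfl fun J hJ => ?_
  rw [(mem_powersetCard.1 hJ).2]

/-- Efficiency: the Shapley values sum to the attributable value `v(Ag) − v(∅)`. -/
theorem shapley_efficiency {Ag : Type*} [Fintype Ag] [DecidableEq Ag] [Nonempty Ag]
    (v : Finset Ag → ℝ) :
    ∑ i : Ag, shapley v i = v Finset.univ - v ∅ := by
  let A : ℕ → ℝ := fun k => 𝔼 J ∈ powersetCard k univ, v J
  have expect_marginal : ∀ k ∈ range (Fintype.card Ag),
      𝔼 i, 𝔼 J ∈ powersetCard k (univ.erase i), (v (insert i J) - v J) = A (k + 1) - A k := by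
    intro k hk
    simp only [expect_sub_distrib]
    rw [expect_expect_powersetCard_erase_insert, expect_expect_powersetCard_erase (mem_range.1 hk)]
  calc ∑ i, shapley v i
      = Fintype.card Ag • 𝔼 i, shapley v i := (Fintype.card_smul_expect _).symm
    _ = Fintype.card Ag • 𝔼 k ∈ range (Fintype.card Ag), (A (k + 1) - A k) := by
        simp only [shapley_eq_expect]
        rw [expect_comm, expect_congr rfl expect_marginal]
    _ = ∑ k ∈ range (Fintype.card Ag), (A (k + 1) - A k) := by
        simpa only [card_range] using card_smul_expect (range (Fintype.card Ag)) _
    _ = A (Fintype.card Ag) - A 0 := sum_range_sub A _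
    _ = v univ - v ∅ := by
        simp only [A, ← card_univ, powersetCard_self, powersetCard_zero, expect_singleton]
end

section
/- For every coalitional value function v : Finset Ag → ℝ on a nonempty finite set of agents Ag with |Ag| = n, and any two distinct agents i, j ∈ Ag, if v(J ∪ {i}) = v(J ∪ {j}) for every subset J ⊆ Ag \ {i, j}, then Sh_i(v) = Sh_j(v). (Symmetry: two agents with identical contributions receive equal degrees of responsibility.) -/
open Finset

/-!
The Shapley value is equivariant under relabelling the agents. The hypothesis on `i` and `j` says
that `v` is invariant under the transposition of `i` and `j`, so this transposition carries the
Shapley value of `i` to that of `j`.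
-/

section Equivariance

variable {Ag Bg : Type*} [Fintype Ag] [DecidableEq Ag] [Fintype Bg] [DecidableEq Bg]

theorem shapley_comp_map_equiv (e : Ag ≃ Bg) (v : Finset Bg → ℝ) (i : Ag) :
    shapley (fun J ↦ v (J.map e.toEmbedding)) i = shapley v (e i) := by
  refine sum_equiv e.finsetCongr (fun J ↦ ?_) (fun J _ ↦ ?_)
  · simp [subset_erase]
  · simp only [Equiv.finsetCongr_apply, card_map, Fintype.card_congr e, map_insert,
      Equiv.coe_toEmbedding]

end Equivariance

section Swap

variable {α β : Type*} [DecidableEq α] {i j : α}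

theorem finset_map_swap_eq_self {J : Finset α} (hJ : i ∈ J ↔ j ∈ J) :
    J.map (Equiv.swap i j).toEmbedding = J := by
  rw [← coe_inj, coe_map]
  exact (Equiv.swap_bijOn_self hJ).image_eq

theorem finset_map_swap_insert {K : Finset α} (hi : i ∉ K) (hj : j ∉ K) :
    (insert i K).map (Equiv.swap i j).toEmbedding = insert j K := by
  rw [map_insert, finset_map_swap_eq_self (iff_of_false hi hj), Equiv.coe_toEmbedding,
    Equiv.swap_apply_left]

theorem apply_map_swap_of_apply_insert_eq {v : Finset α → β}
    (hv : ∀ K, i ∉ K → j ∉ K → v (insert i K) = v (insert j K)) (J : Finset α) :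
    v (J.map (Equiv.swap i j).toEmbedding) = v J := by
  by_cases hi : i ∈ J <;> by_cases hj : j ∈ J
  · rw [finset_map_swap_eq_self (iff_of_true hi hj)]
  · obtain ⟨K, hiK, rfl⟩ : ∃ K, i ∉ K ∧ insert i K = J :=
      ⟨J.erase i, notMem_erase i J, insert_erase hi⟩
    have hjK : j ∉ K := fun h ↦ hj (mem_insert_of_mem h)
    rw [finset_map_swap_insert hiK hjK, hv K hiK hjK]
  · obtain ⟨K, hjK, rfl⟩ : ∃ K, j ∉ K ∧ insert j K = J :=
      ⟨J.erase j, notMem_erase j J, insert_erase hj⟩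
    have hiK : i ∉ K := fun h ↦ hi (mem_insert_of_mem h)
    rw [Equiv.swap_comm, finset_map_swap_insert hjK hiK, hv K hiK hjK]
  · rw [finset_map_swap_eq_self (iff_of_false hi hj)]

end Swap

/-- Symmetry: two agents with identical contributions receive equal Shapley values. -/
theorem shapley_symmetry {Ag : Type*} [Fintype Ag] [DecidableEq Ag] [Nonempty Ag]
    (v : Finset Ag → ℝ) (i j : Ag) (hij : i ≠ j)
    (hsym : ∀ J ⊆ ((Finset.univ : Finset Ag).erase i).erase j,
      v (insert i J) = v (insert j J)) :
    shapley v i = shapley v j := by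
  have swap_invariant : (fun J ↦ v (J.map (Equiv.swap i j).toEmbedding)) = v :=
    funext <| apply_map_swap_of_apply_insert_eq fun K hi hj ↦
      hsym K (subset_erase.2 ⟨subset_erase.2 ⟨subset_univ K, hi⟩, hj⟩)
  calc shapley v i = shapley (fun J ↦ v (J.map (Equiv.swap i j).toEmbedding)) i := by
        rw [swap_invariant]
    _ = shapley v (Equiv.swap i j i) := shapley_comp_map_equiv (Equiv.swap i j) v i
    _ = shapley v j := by rw [Equiv.swap_apply_left]
end

section
/- Let Ag be a finite set with |Ag| = n, let v : Finset Ag → ℝ, and let i, j ∈ Ag be distinct agents such that v(J ∪ {i}) = v(J ∪ {j}) for every J ⊆ Ag \ {i, j}. For a bijection π : Ag → Fin n, let f(π) = π ∘ (swap i j) be the ordering obtained from π by exchanging the positions of i and j. Then for every bijection π : Ag → Fin n, v(P_i(π) ∪ {i}) − v(P_i(π)) = v(P_j(f(π)) ∪ {j}) − v(P_j(f(π))), where P_k(π) = { l ∈ Ag : π(l) < π(k) }. -/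
open Finset

/-- `P_k(π)`: the set of agents ordered strictly before `k` by the ordering `π`. -/
def preds {Ag : Type*} [Fintype Ag] [DecidableEq Ag]
    (π : Ag ≃ Fin (Fintype.card Ag)) (k : Ag) : Finset Ag :=
  Finset.univ.filter (fun l => π l < π k)

/-!
The exchange of `i` and `j` carries the predecessors of `i` under `π` to those of `j` under `f(π)`.
Symmetry of `i` and `j` says exactly that `v` is unchanged when a coalition is transported along
this exchange, so both terms of the marginal contribution are preserved separately.
-/

section SymmetricAgents

variable {Ag M : Type*} [DecidableEq Ag] {v : Finset Ag → M} {i j : Ag}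

/-- Agents `i` and `j` are symmetric for the value function `v`: adding either of them to a
coalition containing neither gives the same value. -/
def SymmetricAgents (v : Finset Ag → M) (i j : Ag) : Prop :=
  ∀ ⦃J : Finset Ag⦄, i ∉ J → j ∉ J → v (insert i J) = v (insert j J)

theorem SymmetricAgents.symm (h : SymmetricAgents v i j) : SymmetricAgents v j i :=
  fun _ hj hi => (h hi hj).symm

theorem map_swap_eq_self {J : Finset Ag} (hi : i ∉ J) (hj : j ∉ J) :
    J.map (Equiv.swap i j).toEmbedding = J := by
  rw [map_eq_image]
  refine (image_congr fun l hl => ?_).trans image_id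
  exact Equiv.swap_apply_of_ne_of_ne (ne_of_mem_of_not_mem hl hi) (ne_of_mem_of_not_mem hl hj)

theorem map_swap_insert_left {J : Finset Ag} (hi : i ∉ J) (hj : j ∉ J) :
    (insert i J).map (Equiv.swap i j).toEmbedding = insert j J := by
  rw [map_insert, map_swap_eq_self hi hj, Equiv.coe_toEmbedding, Equiv.swap_apply_left]

theorem map_swap_eq_self_of_mem {S : Finset Ag} (hi : i ∈ S) (hj : j ∈ S) :
    S.map (Equiv.swap i j).toEmbedding = S := by
  refine map_perm fun l hl => ?_
  rcases (Equiv.swap_apply_ne_self_iff.mp hl).2 with rfl | rfl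
  exacts [hi, hj]

theorem SymmetricAgents.apply_map_swap_of_mem_of_notMem (h : SymmetricAgents v i j)
    {S : Finset Ag} (hi : i ∈ S) (hj : j ∉ S) :
    v (S.map (Equiv.swap i j).toEmbedding) = v S := by
  have hi' : i ∉ S.erase i := notMem_erase i S
  have hj' : j ∉ S.erase i := fun hmem => hj (mem_of_mem_erase hmem)
  rw [← insert_erase hi, map_swap_insert_left hi' hj', h hi' hj']

theorem SymmetricAgents.apply_map_swap (h : SymmetricAgents v i j) (S : Finset Ag) :
    v (S.map (Equiv.swap i j).toEmbedding) = v S := by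
  by_cases hi : i ∈ S <;> by_cases hj : j ∈ S
  · rw [map_swap_eq_self_of_mem hi hj]
  · exact h.apply_map_swap_of_mem_of_notMem hi hj
  · rw [Equiv.swap_comm]
    exact h.symm.apply_map_swap_of_mem_of_notMem hj hi
  · rw [map_swap_eq_self hi hj]

end SymmetricAgents

section Predecessors

variable {Ag β : Type*} [Preorder β] [LocallyFiniteOrderBot β]

/-- The agents placed strictly before `k` by `π`, for positions in any preorder whose initial
segments are finite, such as `ℕ` for a countably infinite set of agents. -/
def predecessors (π : Ag ≃ β) (k : Ag) : Finset Ag :=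
  (Iio (π k)).map π.symm.toEmbedding

theorem preds_eq_predecessors [Fintype Ag] [DecidableEq Ag]
    (π : Ag ≃ Fin (Fintype.card Ag)) (k : Ag) : preds π k = predecessors π k := by
  ext l
  simp [preds, predecessors, mem_map_equiv]

theorem predecessors_trans (σ : Equiv.Perm Ag) (π : Ag ≃ β) (k : Ag) :
    predecessors (σ.trans π) k = (predecessors π (σ k)).map σ.symm.toEmbedding := by
  rw [predecessors, predecessors, map_map]
  rfl

theorem predecessors_swap_trans [DecidableEq Ag] (π : Ag ≃ β) (i j : Ag) :
    predecessors ((Equiv.swap i j).trans π) j =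
      (predecessors π i).map (Equiv.swap i j).toEmbedding := by
  rw [predecessors_trans, Equiv.swap_apply_right, Equiv.symm_swap]

theorem swap_marginal_contribution_general {M : Type*} [DecidableEq Ag] [Sub M]
    {v : Finset Ag → M} {i j : Ag} (h : SymmetricAgents v i j) (π : Ag ≃ β) :
    v (insert i (predecessors π i)) - v (predecessors π i)
      = v (insert j (predecessors ((Equiv.swap i j).trans π) j))
        - v (predecessors ((Equiv.swap i j).trans π) j) := by
  have insert_swap : insert j (predecessors ((Equiv.swap i j).trans π) j) =
      (insert i (predecessors π i)).map (Equiv.swap i j).toEmbedding := by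
    rw [map_insert, Equiv.coe_toEmbedding, Equiv.swap_apply_left, predecessors_swap_trans]
  rw [insert_swap, predecessors_swap_trans, h.apply_map_swap, h.apply_map_swap]

end Predecessors

/-- For symmetric agents `i` and `j`, the marginal contribution of `i` under an
ordering `π` equals the marginal contribution of `j` under the ordering
`f(π) = π ∘ (swap i j)` obtained by exchanging the positions of `i` and `j`. -/
theorem swap_marginal_contribution {Ag : Type*} [Fintype Ag] [DecidableEq Ag]
    (v : Finset Ag → ℝ) (i j : Ag) (hij : i ≠ j)
    (hsym : ∀ J ⊆ ((Finset.univ : Finset Ag).erase i).erase j,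
      v (insert i J) = v (insert j J))
    (π : Ag ≃ Fin (Fintype.card Ag)) :
    v (insert i (preds π i)) - v (preds π i)
      = v (insert j (preds ((Equiv.swap i j).trans π) j))
        - v (preds ((Equiv.swap i j).trans π) j) := by
  have symmetric : SymmetricAgents v i j := fun J hi hj =>
    hsym J (subset_erase.mpr ⟨subset_erase.mpr ⟨subset_univ J, hi⟩, hj⟩)
  simpa only [preds_eq_predecessors] using swap_marginal_contribution_general symmetric π
end

section
/- Let Ag be a nonempty finite set of agents with |Ag| = n and let v : Finset Ag → ℝ be a coalitional value function. Then Σ_{J ⊆ Ag} (Σ_{i ∈ Ag \ J} (v(J ∪ {i}) − v(J)) · (|J|! · (n − |J| − 1)! / n!)) = v(Ag) − v(∅), where the outer sum ranges over all subsets J of Ag (with the inner sum empty when J = Ag). (The sum-exchange identity underlying the efficiency proof, obtained after swapping the order of summation over agents and coalitions.) -/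
open Finset

/-!
Let `A k` be the average of `v` over the coalitions of size `k` among `n` agents. Every coalition of
size `k + 1` is `J ∪ {i}` for `k + 1` pairs `(J, i)` with `#J = k` and `i ∉ J`, while every `J` of
size `k < n` occurs in `n - k` such pairs. The Shapley weight is exactly the factor that turns both
counts into averages, so the marginal contributions to coalitions of size `k` have weighted sum
`A (k + 1) - A k`. Summing over `k` telescopes to `A n - A 0`.
-/

section ShapleyWeight

open scoped Nat

/-- The Shapley weight of a coalition of size `k` among `n` agents: the probability that, in a
uniformly random ordering of the agents, a given agent outside the coalition is preceded exactly by
its members. It has this meaning only for `k < n`, where the subtraction is not truncated. -/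
def shapleyWeight (n k : ℕ) : ℚ≥0 := (k ! * (n - k - 1)!) / n !

theorem shapleyWeight_mul_sub {n k : ℕ} (h : k < n) :
    shapleyWeight n k * (n - k : ℕ) = (n.choose k : ℚ≥0)⁻¹ := by
  have factorial_sub : ((n - k)! : ℚ≥0) = (n - k : ℕ) * (n - k - 1)! :=
    mod_cast (Nat.mul_factorial_pred (Nat.sub_ne_zero_of_lt h)).symm
  rw [shapleyWeight, Nat.cast_choose ℚ≥0 h.le, inv_div, factorial_sub]
  ring

theorem shapleyWeight_mul_succ {n k : ℕ} (h : k < n) :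
    shapleyWeight n k * (k + 1 : ℕ) = (n.choose (k + 1) : ℚ≥0)⁻¹ := by
  rw [shapleyWeight, Nat.cast_choose ℚ≥0 h, inv_div, Nat.factorial_succ, Nat.sub_sub]
  push_cast
  ring

end ShapleyWeight

section Coalitions

open scoped BigOperators

variable {α M : Type*} [DecidableEq α]

theorem sum_powersetCard_sum_sdiff_insert [AddCommMonoid M] (s : Finset α) (k : ℕ)
    (f : Finset α → M) :
    ∑ J ∈ s.powersetCard k, ∑ i ∈ s \ J, f (insert i J) =
      (k + 1) • ∑ K ∈ s.powersetCard (k + 1), f K := by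
  calc ∑ J ∈ s.powersetCard k, ∑ i ∈ s \ J, f (insert i J)
      = ∑ K ∈ s.powersetCard (k + 1), ∑ _i ∈ K, f K := by
        rw [sum_sigma', sum_sigma']
        refine sum_bij' (fun x _ ↦ ⟨insert x.2 x.1, x.2⟩) (fun x _ ↦ ⟨x.1.erase x.2, x.2⟩)
          ?_ ?_ ?_ ?_ ?_ <;> rintro ⟨J, i⟩ h <;>
          simp only [mem_sigma, mem_powersetCard, mem_sdiff, Sigma.mk.injEq, heq_eq_eq, and_true]
            at h ⊢
        · grind
        · grind
        · exact erase_insert h.2.2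
        · exact insert_erase h.2
    _ = ∑ K ∈ s.powersetCard (k + 1), (k + 1) • f K :=
        sum_congr rfl fun K hK ↦ by rw [sum_const, (mem_powersetCard.1 hK).2]
    _ = (k + 1) • ∑ K ∈ s.powersetCard (k + 1), f K := (smul_sum ..).symm

theorem sum_powersetCard_sum_sdiff_const [AddCommMonoid M] (s : Finset α) (k : ℕ)
    (f : Finset α → M) :
    ∑ J ∈ s.powersetCard k, ∑ _i ∈ s \ J, f J = (#s - k) • ∑ J ∈ s.powersetCard k, f J := by
  rw [smul_sum]
  refine sum_congr rfl fun J hJ ↦ ?_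
  obtain ⟨hJs, hJk⟩ := mem_powersetCard.1 hJ
  rw [sum_const, card_sdiff_of_subset hJs, hJk]

variable [AddCommGroup M] [Module ℚ≥0 M]

theorem shapleyWeight_smul_sum_powersetCard {s : Finset α} {k : ℕ} (hk : k < #s)
    (v : Finset α → M) :
    shapleyWeight #s k • ∑ J ∈ s.powersetCard k, ∑ i ∈ s \ J, (v (insert i J) - v J) =
      (𝔼 K ∈ s.powersetCard (k + 1), v K) - 𝔼 J ∈ s.powersetCard k, v J := by
  simp only [sum_sub_distrib, sum_powersetCard_sum_sdiff_insert, sum_powersetCard_sum_sdiff_const]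
  rw [smul_sub, ← Nat.cast_smul_eq_nsmul ℚ≥0, ← Nat.cast_smul_eq_nsmul ℚ≥0, smul_smul, smul_smul,
    shapleyWeight_mul_succ hk, shapleyWeight_mul_sub hk, expect, expect, card_powersetCard,
    card_powersetCard]

theorem shapley_sum_exchange_general (s : Finset α) (v : Finset α → M) :
    ∑ J ∈ s.powerset, shapleyWeight #s #J • ∑ i ∈ s \ J, (v (insert i J) - v J) = v s - v ∅ := by
  calc ∑ J ∈ s.powerset, shapleyWeight #s #J • ∑ i ∈ s \ J, (v (insert i J) - v J)
      = ∑ k ∈ range (#s + 1),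
          shapleyWeight #s k • ∑ J ∈ s.powersetCard k, ∑ i ∈ s \ J, (v (insert i J) - v J) := by
        rw [sum_powerset]
        refine sum_congr rfl fun k _ ↦ ?_
        rw [smul_sum]
        exact sum_congr rfl fun J hJ ↦ by rw [(mem_powersetCard.1 hJ).2]
    _ = ∑ k ∈ range #s,
          shapleyWeight #s k • ∑ J ∈ s.powersetCard k, ∑ i ∈ s \ J, (v (insert i J) - v J) := by
        rw [sum_range_succ, powersetCard_self, sum_singleton, Finset.sdiff_self, sum_empty,
          smul_zero, add_zero]
    _ = ∑ k ∈ range #s,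
          ((𝔼 K ∈ s.powersetCard (k + 1), v K) - 𝔼 J ∈ s.powersetCard k, v J) :=
        sum_congr rfl fun k hk ↦ shapleyWeight_smul_sum_powersetCard (mem_range.1 hk) v
    _ = (𝔼 K ∈ s.powersetCard #s, v K) - 𝔼 J ∈ s.powersetCard 0, v J :=
        sum_range_sub (fun k ↦ 𝔼 J ∈ s.powersetCard k, v J) #s
    _ = v s - v ∅ := by
        rw [powersetCard_self, powersetCard_zero, expect_singleton, expect_singleton]

end Coalitions

/-- The sum-exchange identity underlying the efficiency proof of the Shapley-based
responsibility allocation. -/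
theorem shapley_sum_exchange {Ag : Type*} [Fintype Ag] [DecidableEq Ag] [Nonempty Ag]
    (v : Finset Ag → ℝ) :
    ∑ J ∈ (Finset.univ : Finset Ag).powerset,
      (∑ i ∈ (Finset.univ : Finset Ag) \ J, (v (insert i J) - v J)) *
        ((J.card.factorial * (Fintype.card Ag - J.card - 1).factorial : ℝ) /
          (Fintype.card Ag).factorial)
      = v Finset.univ - v ∅ := by
  simpa [shapleyWeight, NNRat.smul_def, mul_comm] using shapley_sum_exchange_general univ v
end
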